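/- For any four points r, x, s, y ∈ S^1, the linking number J(rx,sy) belongs to the set {0, 1, −1, 1/2, −1/2}, and its value does not depend on the choice of the removed point o ∈ S^1 \ {r,x,s,y} used to identify S^1 \ {o} with (0,1). -/

import Mathlib

noncomputable section

open scoped Classical
open MvPolynomial

set_option maxHeartbeats 1000000
set_option synthInstance.maxHeartbeats 400000

instance fact01 : Fact ((0:ℝ) < 1) := ⟨one_pos⟩

/-- The circle, modelled as `ℝ/ℤ`. -/
abbrev Circle1 : Type := AddCircle (1:ℝ)

/-- The coordinate in `[0,1)` of the point `x` of the circle obtained after removing the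
point `o` and identifying the complement of `o` with an interval. -/
def coordAt (o x : Circle1) : ℝ := ((AddCircle.equivIco 1 0) (x - o) : ℝ)

/-- The sign `△` of a real number, as a rational number in `{-1, 0, 1}`. -/
def sgnQ (a : ℝ) : ℚ := if a < 0 then -1 else if a = 0 then 0 else 1

/-- The linking number `J(rx, sy)` of the chords `rx` and `sy`, computed using the
cut point `o`. -/
def linkingAt (o r x s y : Circle1) : ℚ :=
  (1/2) * (sgnQ (coordAt o r - coordAt o x) * sgnQ (coordAt o r - coordAt o y)
        * sgnQ (coordAt o y - coordAt o x)
      - sgnQ (coordAt o r - coordAt o x) * sgnQ (coordAt o r - coordAt o s)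
        * sgnQ (coordAt o s - coordAt o x))

lemma circle1_infinite : Infinite Circle1 := by
  have h : (Set.Ico (0:ℝ) (0+1)).Infinite := Set.Ico_infinite (by norm_num)
  haveI := h.to_subtype
  exact Infinite.of_injective (fun q : Set.Ico (0:ℝ) (0+1) => (AddCircle.equivIco 1 0).symm q)
    ((AddCircle.equivIco 1 0).symm.injective)

lemma exists_cut (r x s y : Circle1) :
    ∃ o : Circle1, o ≠ r ∧ o ≠ x ∧ o ≠ s ∧ o ≠ y := by
  haveI : Infinite Circle1 := circle1_infinite
  have hfin : ({r, x, s, y} : Set Circle1).Finite :=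
    (((Set.finite_singleton y).insert s).insert x).insert r
  obtain ⟨o, ho⟩ := hfin.infinite_compl.nonempty
  simp only [Set.mem_compl_iff, Set.mem_insert_iff, Set.mem_singleton_iff, not_or] at ho
  exact ⟨o, ho.1, ho.2.1, ho.2.2.1, ho.2.2.2⟩

/-- The linking number `J(rx, sy)` of the chords `rx` and `sy` (computed with respect to
some cut point distinct from the four points; by the independence of the choice this is
the linking number). -/
def linkQ (r x s y : Circle1) : ℚ := linkingAt (exists_cut r x s y).choose r x s y

/-- The set of points of the circle `l`, listed in anticlockwise (cyclic) order:
there is a cut point `o` avoiding them such that the induced coordinates are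
strictly increasing along the list. -/
def AnticlockwiseList (l : List Circle1) : Prop :=
  ∃ o : Circle1, (∀ p ∈ l, p ≠ o) ∧ (l.map (coordAt o)).Chain' (· < ·)

/-- Index type for the generators `xy` of the swapping ring of `P`
(one generator for each ordered pair of distinct points; the generators `xx`
are identified with `0`). -/
abbrev SwapIdx (P : Set Circle1) : Type := {q : (↥P) × (↥P) // q.1 ≠ q.2}

/-- The swapping ring `Z(P)`: the polynomial ring over `K` on the generators `xy`,
`x ≠ y ∈ P` (this realizes the commutative ring generated by all ordered pairs `xy`
subject to the relations `xx = 0`). -/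
abbrev SwapRing (K : Type) [Field K] (P : Set Circle1) : Type := MvPolynomial (SwapIdx P) K

/-- The generator `xy` of the swapping ring (equal to `0` when `x = y`). -/
def gen (K : Type) [Field K] (P : Set Circle1) (x y : ↥P) : SwapRing K P :=
  if h : x ≠ y then MvPolynomial.X (⟨(x, y), h⟩ : SwapIdx P) else 0

/-- The value of the `(c1,c2)`-swapping bracket on two generators `rx` and `sy`:
`J(rx,sy) • (c1 • ry·sx + c2 • rx·sy)`. -/
def genBr (K : Type) [Field K] (P : Set Circle1) (c1 c2 : K) (g g' : SwapIdx P) :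
    SwapRing K P :=
  ((linkQ g.1.1.1 g.1.2.1 g'.1.1.1 g'.1.2.1 : ℚ) : K) •
    (c1 • (gen K P g.1.1 g'.1.2 * gen K P g'.1.1 g.1.2)
      + c2 • (gen K P g.1.1 g.1.2 * gen K P g'.1.1 g'.1.2))

/-- The `(c1,c2)`-swapping bracket on `Z(P)`: the biderivation extending
`{rx, sy} = J(rx,sy)·(c1·ry·sx + c2·rx·sy)` by the Leibniz rule in each argument.
The swapping bracket is the case `c1 = 1, c2 = 0`. -/
def swapBr (K : Type) [Field K] (P : Set Circle1) (c1 c2 : K) (a b : SwapRing K P) :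
    SwapRing K P :=
  (MvPolynomial.mkDerivation K
    (fun g : SwapIdx P => (MvPolynomial.mkDerivation K (genBr K P c1 c2 g)) b)) a

/-- `Δ((x_1,…,x_m),(y_1,…,y_m)) = det (x_i y_j)` in the swapping ring. -/
def Dmat (K : Type) [Field K] (P : Set Circle1) (m : ℕ) (xs ys : Fin m → ↥P) :
    SwapRing K P :=
  Matrix.det (Matrix.of fun i j => gen K P (xs i) (ys j))

/-- The ideal `R_n(P)` of `Z(P)` generated by all `(n+1)×(n+1)` determinants
`Δ((x_1,…,x_{n+1}),(y_1,…,y_{n+1}))`. -/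
def Rideal (K : Type) [Field K] (P : Set Circle1) (n : ℕ) : Ideal (SwapRing K P) :=
  Ideal.span {D : SwapRing K P | ∃ xs ys : Fin (n+1) → ↥P, D = Dmat K P (n+1) xs ys}

/-- The rank `n` swapping ring `Z_n(P) = Z(P)/R_n(P)`. -/
abbrev ZnRing (K : Type) [Field K] (P : Set Circle1) (n : ℕ) : Type :=
  SwapRing K P ⧸ Rideal K P n

/-- The quotient map `Z(P) → Z_n(P)`. -/
def toZn (K : Type) [Field K] (P : Set Circle1) (n : ℕ) :
    SwapRing K P →+* ZnRing K P n := Ideal.Quotient.mk (Rideal K P n)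

/-- The total fraction ring `Q_n(P)` of the rank `n` swapping ring. -/
abbrev QnRing (K : Type) [Field K] (P : Set Circle1) (n : ℕ) : Type :=
  Localization (nonZeroDivisors (ZnRing K P n))

/-- The canonical map `Z(P) → Q_n(P)`. -/
def toQn (K : Type) [Field K] (P : Set Circle1) (n : ℕ) :
    SwapRing K P →+* QnRing K P n :=
  (algebraMap (ZnRing K P n) (QnRing K P n)).comp (toZn K P n)

/-- `Bq` is the extension to the total fraction ring `Q_n(P)` of the `(c1,c2)`-swapping
bracket of the rank `n` swapping algebra: it agrees with the swapping bracket on the image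
of `Z(P)` and satisfies the Leibniz rule in both arguments (these properties determine it
uniquely). -/
def IsQnBracket (K : Type) [Field K] (P : Set Circle1) (n : ℕ) (c1 c2 : K)
    (Bq : QnRing K P n → QnRing K P n → QnRing K P n) : Prop :=
  (∀ a b : SwapRing K P,
      Bq (toQn K P n a) (toQn K P n b) = toQn K P n (swapBr K P c1 c2 a b)) ∧
  (∀ a b c : QnRing K P n, Bq (a * b) c = a * Bq b c + b * Bq a c) ∧
  (∀ a b c : QnRing K P n, Bq a (b * c) = b * Bq a c + c * Bq a b)

/-- The `n`-tuple `(x_1, …, x_a, y_1, …, y_b, z_1, …, z_{n-a-b})` built from three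
families of points (families are indexed from `0`, i.e. `x 0 = x_1`). -/
def rows3 {α : Type*} {n : ℕ} (x y z : ℕ → α) (a b : ℕ) : Fin n → α :=
  fun i => if (i : ℕ) < a then x (i : ℕ)
    else if (i : ℕ) < a + b then y ((i : ℕ) - a)
    else z ((i : ℕ) - (a + b))

/-- The `n`-tuple `(x_1, …, x_a, y_1, …, y_b, z_1, …, z_{n-1-a-b}, w)` built from three
families of points and a final point `w`. -/
def rows3s {α : Type*} {n : ℕ} (x y z : ℕ → α) (a b : ℕ) (w : α) : Fin n → α :=
  fun i => if (i : ℕ) < a then x (i : ℕ)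
    else if (i : ℕ) < a + b then y ((i : ℕ) - a)
    else if (i : ℕ) < n - 1 then z ((i : ℕ) - (a + b))
    else w

/-- The `n`-tuple `(x_1, …, x_{n-1}, t)`. -/
def snocTup {α : Type*} {n : ℕ} (x : ℕ → α) (t : α) : Fin n → α :=
  fun i => if (i : ℕ) < n - 1 then x (i : ℕ) else t

/-- The list `f_a, f_{a-1}, …, f_1` (descending enumeration). -/
def descPts (f : ℕ → Circle1) (a : ℕ) : List Circle1 := ((List.range a).map f).reverse

/-- The list `f_1, f_2, …, f_a` (ascending enumeration). -/
def ascPts (f : ℕ → Circle1) (a : ℕ) : List Circle1 := (List.range a).map f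

/-- The `(n×n)`-determinant quotient `Δ(numR, v)/Δ(denR, v)` as an element of the total
fraction ring `Q_n(P)`. -/
def EQuot (K : Type) [Field K] (P : Set Circle1) (n : ℕ)
    (numR denR v : Fin n → ↥P)
    (h : toZn K P n (Dmat K P n denR v) ∈ nonZeroDivisors (ZnRing K P n)) :
    QnRing K P n :=
  Localization.mk (toZn K P n (Dmat K P n numR v)) ⟨toZn K P n (Dmat K P n denR v), h⟩


lemma coordAt_coe (o p : Circle1) : ((coordAt o p : ℝ) : Circle1) = p - o :=
  (AddCircle.equivIco 1 0).symm_apply_apply (p - o)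

lemma coordAt_mem (o p : Circle1) : 0 ≤ coordAt o p ∧ coordAt o p < 1 := by
  have h := ((AddCircle.equivIco (1:ℝ) 0) (p - o)).2
  exact ⟨h.1, h.2.trans_eq (zero_add 1)⟩

lemma coordAt_change (o o' p : Circle1) :
    (coordAt o' p = coordAt o p - coordAt o o' ∧ coordAt o o' ≤ coordAt o p) ∨
    (coordAt o' p = coordAt o p - coordAt o o' + 1 ∧ coordAt o p < coordAt o o') := by
  have h : ((coordAt o' p - (coordAt o p - coordAt o o') : ℝ) : Circle1) = 0 := by
    rw [AddCircle.coe_sub, AddCircle.coe_sub, coordAt_coe, coordAt_coe, coordAt_coe]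
    abel
  obtain ⟨n, hn⟩ := (AddCircle.coe_eq_zero_iff (1:ℝ)).1 h
  rw [zsmul_eq_mul, mul_one] at hn
  have h1 := coordAt_mem o' p
  have h2 := coordAt_mem o p
  have h3 := coordAt_mem o o'
  have ha : (-1 : ℝ) < n := by linarith
  have hb : (n : ℝ) < 2 := by linarith
  have ha' : -1 < n := by exact_mod_cast ha
  have hb' : n < 2 := by exact_mod_cast hb
  obtain rfl | rfl : n = 0 ∨ n = 1 := by omega
  · left
    push_cast at hn
    constructor <;> linarith
  · right
    push_cast at hn
    constructor <;> linarith

lemma sgnQ_neg' {a : ℝ} (h : a < 0) : sgnQ a = -1 := by simp [sgnQ, h]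

lemma sgnQ_pos' {a : ℝ} (h : 0 < a) : sgnQ a = 1 := by
  simp [sgnQ, h.not_gt, h.ne']

lemma sgnQ_cases (a : ℝ) : sgnQ a = -1 ∨ sgnQ a = 0 ∨ sgnQ a = 1 := by
  unfold sgnQ
  split_ifs <;> simp

/-- Change of cut point: there are signs attached to points. -/
lemma sgn_change (o o' : Circle1) : ∃ e : Circle1 → ℚ, (∀ p, e p * e p = 1) ∧
    ∀ p q, sgnQ (coordAt o' p - coordAt o' q) = e p * e q * sgnQ (coordAt o p - coordAt o q) := by
  refine ⟨fun p => if coordAt o p < coordAt o o' then -1 else 1, ?_, ?_⟩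
  · intro p
    dsimp only
    split_ifs <;> norm_num
  · intro p q
    have hp := coordAt_mem o p
    have hq := coordAt_mem o q
    dsimp only
    rcases coordAt_change o o' p with ⟨h1, h2⟩ | ⟨h1, h2⟩ <;>
    rcases coordAt_change o o' q with ⟨h3, h4⟩ | ⟨h3, h4⟩
    · rw [if_neg h2.not_gt, if_neg h4.not_gt, h1, h3]
      simp
    · rw [if_neg h2.not_gt, if_pos h4, sgnQ_neg' (by linarith), sgnQ_pos' (by linarith)]
      norm_num
    · rw [if_pos h2, if_neg h4.not_gt, sgnQ_pos' (by linarith), sgnQ_neg' (by linarith)]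
      norm_num
    · rw [if_pos h2, if_pos h4, h1, h3]
      simp

/-- For any four points `r, x, s, y` of the circle, the linking number
`J(rx, sy)` belongs to `{0, 1, -1, 1/2, -1/2}`, and its value does not depend on the choice
of the removed cut point `o ∉ {r, x, s, y}`. -/
theorem linking_number_values_and_independence (r x s y o o' : Circle1)
    (ho : o ≠ r ∧ o ≠ x ∧ o ≠ s ∧ o ≠ y)
    (ho' : o' ≠ r ∧ o' ≠ x ∧ o' ≠ s ∧ o' ≠ y) :
    linkingAt o r x s y ∈ ({0, 1, -1, 1/2, -1/2} : Set ℚ) ∧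
    linkingAt o r x s y = linkingAt o' r x s y := by
  constructor
  · unfold linkingAt
    have ha := sgnQ_cases (coordAt o r - coordAt o x)
    have tri : ∀ u v : ℝ, sgnQ u * sgnQ v = -1 ∨ sgnQ u * sgnQ v = 0 ∨ sgnQ u * sgnQ v = 1 := by
      intro u v
      rcases sgnQ_cases u with h | h | h <;> rcases sgnQ_cases v with h' | h' | h' <;>
        simp [h, h']
    simp only [Set.mem_insert_iff, Set.mem_singleton_iff]
    rw [mul_assoc, mul_assoc]
    rcases ha with h | h | h <;>
    rcases tri (coordAt o r - coordAt o y) (coordAt o y - coordAt o x) with h1 | h1 | h1 <;>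
    rcases tri (coordAt o r - coordAt o s) (coordAt o s - coordAt o x) with h2 | h2 | h2 <;>
    rw [h, h1, h2] <;> norm_num
  · obtain ⟨e, he, hs⟩ := sgn_change o o'
    unfold linkingAt
    simp only [hs]
    generalize sgnQ (coordAt o r - coordAt o x) = a
    generalize sgnQ (coordAt o r - coordAt o y) = b
    generalize sgnQ (coordAt o y - coordAt o x) = c
    generalize sgnQ (coordAt o r - coordAt o s) = d
    generalize sgnQ (coordAt o s - coordAt o x) = f
    have k : ∀ p b c, e r * e x * a * (e r * e p * b) * (e p * e x * c) = a * b * c := by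
      intro p b c
      calc _ = (e r * e r) * (e x * e x) * (e p * e p) * (a * b * c) := by ring
        _ = _ := by rw [he, he, he]; ring
    rw [k, k]

end
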